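/- There exists a doubly periodic binary (2,6,2)-de Bruijn covering array of size 13 × 12. -/

import Mathlib

/-- The `m × n` window of a doubly periodic array at position `(i,j)`. -/
def arrWindow {Alp : Type*} {M N : ℕ} (A : ZMod M × ZMod N → Alp) (m n : ℕ)
    (i : ZMod M) (j : ZMod N) : Fin m → Fin n → Alp :=
  fun a b => A (i + (a.val : ZMod M), j + (b.val : ZMod N))

/-- Hamming distance between two `m × n` matrices: the number of differing entries. -/
def matHammingDist {Alp : Type*} [DecidableEq Alp] {m n : ℕ}
    (X Y : Fin m → Fin n → Alp) : ℕ := ∑ a : Fin m, hammingDist (X a) (Y a)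

/-- `A` is an `(m,n,R)`-de Bruijn covering array of size `M × N`. -/
def IsDBCA {Alp : Type*} [DecidableEq Alp] (M N m n R : ℕ)
    (A : ZMod M × ZMod N → Alp) : Prop :=
  ∀ W : Fin m → Fin n → Alp, ∃ (i : ZMod M) (j : ZMod N),
    matHammingDist W (arrWindow A m n i j) ≤ R

/-!
The array, found by a simulated annealing search among the arrays with
`A (i, j + 6) = A (i, j) + 1`:

  001100110011
  111111000000
  011001100110
  011011100100
  000110111001
  000101111010
  111110000001
  101001010110
  110000001111
  000111111000
  101001010110
  001101110010
  101011010100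
-/

/-- Entry `(i, j)` of the array, as a bit of one number (bit `12 * i + j`). -/
def tbl (i j : ℕ) : Bool :=
  Nat.testBit 15461278776279530644433908243031339970242804940 (12 * (i % 13) + j % 12)

/-- The window at `(i, j)` as a list of `12` bits. -/
def wl (i j : ℕ) : List Bool :=
  [tbl i j, tbl i (j+1), tbl i (j+2), tbl i (j+3), tbl i (j+4), tbl i (j+5),
   tbl (i+1) j, tbl (i+1) (j+1), tbl (i+1) (j+2), tbl (i+1) (j+3), tbl (i+1) (j+4),
   tbl (i+1) (j+5)]

/-- Keep the candidates whose remaining budget allows the next bit to be `b`. -/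
def step (b : Bool) : List (ℕ × List Bool) → List (ℕ × List Bool)
  | [] => []
  | (_, []) :: L => step b L
  | (r, c :: t) :: L =>
    match xor b c with
    | false => (r, t) :: step b L
    | true => match r with
      | 0 => step b L
      | r + 1 => (r, t) :: step b L

/-- Every word of length `k` is covered by some candidate within its budget. -/
def cover : ℕ → List (ℕ × List Bool) → Bool
  | 0, [] => false
  | 0, _ :: _ => true
  | k + 1, L => cover k (step false L) && cover k (step true L)

/-- Hamming distance of lists of bits. -/
def ldist : List Bool → List Bool → ℕ
  | a :: s, b :: t => (xor a b).toNat + ldist s t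
  | _, _ => 0

theorem step_sound (b : Bool) (v : List Bool) (L : List (ℕ × List Bool))
    (h : ∃ p ∈ step b L, ldist v p.2 ≤ p.1) : ∃ p ∈ L, ldist (b :: v) p.2 ≤ p.1 := by
  induction L with
  | nil => simp [step] at h
  | cons q L ih =>
    obtain ⟨r, w⟩ := q
    have lift : (∃ p ∈ step b L, ldist v p.2 ≤ p.1) →
        ∃ p ∈ (r, w) :: L, ldist (b :: v) p.2 ≤ p.1 := by
      intro h
      obtain ⟨p, hp, hd⟩ := ih h
      exact ⟨p, List.mem_cons_of_mem _ hp, hd⟩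
    cases w with
    | nil => exact lift h
    | cons c t =>
      cases hx : xor b c with
      | false =>
        simp only [step, hx] at h
        obtain ⟨p, hp, hd⟩ := h
        rcases List.mem_cons.1 hp with rfl | hp
        · exact ⟨_, List.mem_cons_self, by simpa [ldist, hx] using hd⟩
        · exact lift ⟨p, hp, hd⟩
      | true =>
        cases r with
        | zero =>
          simp only [step, hx] at h
          exact lift h
        | succ r =>
          simp only [step, hx] at h
          obtain ⟨p, hp, hd⟩ := h
          rcases List.mem_cons.1 hp with rfl | hp
          · refine ⟨_, List.mem_cons_self, ?_⟩
            simp only [ldist, hx, Bool.toNat_true] at hd ⊢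
            omega
          · exact lift ⟨p, hp, hd⟩

theorem cover_sound (v : List Bool) : ∀ L : List (ℕ × List Bool),
    cover v.length L = true → ∃ p ∈ L, ldist v p.2 ≤ p.1 := by
  induction v with
  | nil =>
    intro L h
    cases L with
    | nil => simp [cover] at h
    | cons p L => exact ⟨p, List.mem_cons_self, by simp [ldist]⟩
  | cons b v ih =>
    intro L h
    simp only [List.length_cons, cover, Bool.and_eq_true] at h
    apply step_sound
    cases b with
    | false => exact ih _ h.1
    | true => exact ih _ h.2

/-- All windows, each with budget `2`. -/
def cands : List (ℕ × List Bool) :=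
  (List.range 13).flatMap fun i => (List.range 12).map fun j => (2, wl i j)

theorem cover_cands : cover 12 cands = true := by
  decide +kernel

theorem entry (x : ZMod 2) (t : Bool) :
    (if x ≠ (if t then 1 else 0) then 1 else 0) = (xor (decide (x = 1)) t).toNat := by
  revert x t
  decide

theorem tbl_mod (i j : ℕ) : tbl (i % 13) (j % 12) = tbl i j := by
  simp [tbl]

/-- The covering array. -/
def theArr : ZMod 13 × ZMod 12 → ZMod 2 := fun p => if tbl p.1.val p.2.val then 1 else 0

theorem theArr_cast (i j : ℕ) : theArr ((i : ZMod 13), (j : ZMod 12)) =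
    if tbl i j then 1 else 0 := by
  simp only [theArr, ZMod.val_natCast, tbl_mod]

/-- A matrix as a list of `12` bits. -/
def enc (W : Fin 2 → Fin 6 → ZMod 2) : List Bool :=
  [decide (W 0 0 = 1), decide (W 0 1 = 1), decide (W 0 2 = 1), decide (W 0 3 = 1),
   decide (W 0 4 = 1), decide (W 0 5 = 1), decide (W 1 0 = 1), decide (W 1 1 = 1),
   decide (W 1 2 = 1), decide (W 1 3 = 1), decide (W 1 4 = 1), decide (W 1 5 = 1)]

theorem dist_eq (W : Fin 2 → Fin 6 → ZMod 2) (i j : ℕ) :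
    matHammingDist W (arrWindow theArr 2 6 (i : ZMod 13) (j : ZMod 12)) =
      ldist (enc W) (wl i j) := by
  have h : ∀ (a : Fin 2) (b : Fin 6),
      arrWindow theArr 2 6 (i : ZMod 13) (j : ZMod 12) a b =
        if tbl (i + a.val) (j + b.val) then 1 else 0 := by
    intro a b
    rw [← theArr_cast]
    simp [arrWindow]
  simp only [matHammingDist, hammingDist, Finset.card_filter, h, entry,
    Fin.sum_univ_two, Fin.sum_univ_six]
  simp only [enc, wl, ldist, add_assoc, add_zero]
  rfl

theorem stmt19 : ∃ A : ZMod 13 × ZMod 12 → ZMod 2, IsDBCA 13 12 2 6 2 A := by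
  refine ⟨theArr, fun W => ?_⟩
  obtain ⟨p, hp, hd⟩ := cover_sound (enc W) cands cover_cands
  simp only [cands, List.mem_flatMap, List.mem_map] at hp
  obtain ⟨i, -, j, -, rfl⟩ := hp
  exact ⟨i, j, (dist_eq W i j).le.trans hd⟩
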